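/- Kinetic energy localization inequality (Brietzke–Fournais–Solovej): Let χ∈C_c^∞(ℝ³) be real and even with 0≤χ≤1 is not required, but ∫χ²=1 and supp χ ⊂ [-1/2,1/2]³. Then there exist b>0 and s₀>0 such that for all s∈(0,s₀), all L>0 and all f∈𝒮(ℝ³): ∫_{ℝ³}|∇f|² dx ≥ ∫_{ℝ³} [ (2π)^{-3} ∫_{ℝ³} ( |p|² − (4s²L²)^{-1} )_+ |(χ_u Q_u f)^∧(p)|² dp + (b/L²)·‖Q_u f‖²_{L²} ] du, where (t)_+ = max(t,0). -/

import Mathlib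

open MeasureTheory Filter Real

noncomputable section

abbrev Vec3 := Fin 3 → ℝ

/-- The Fourier transform `ĝ(p) = ∫ e^{ip·x} g(x) dx`. -/
def ftC (g : Vec3 → ℂ) (p : Vec3) : ℂ :=
  ∫ x : Vec3, Complex.exp (Complex.I * ((∑ k, p k * x k : ℝ) : ℂ)) * g x

/-- The unit cube `[-1/2,1/2]³`. -/
def cube : Set Vec3 := {x : Vec3 | ∀ k, x k ∈ Set.Icc (-(1 : ℝ)/2) (1/2)}

/-- `θ`, the indicator function of the unit cube. -/
def θind : Vec3 → ℝ := Set.indicator cube fun _ => 1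

/-- `θ_u(x) = θ(x/L − u)`, the indicator of the cube of side `L` centered at `uL`. -/
def θu (L : ℝ) (u x : Vec3) : ℝ := θind (L⁻¹ • x - u)

/-- `χ_u(x) = χ(x/L − u)`. -/
def χu (χ : Vec3 → ℝ) (L : ℝ) (u x : Vec3) : ℝ := χ (L⁻¹ • x - u)

/-- The projection `Q_u φ = θ_u φ − L⁻³ ⟨θ_u, φ⟩ θ_u`. -/
def Qu (L : ℝ) (u : Vec3) (φ : Vec3 → ℂ) (x : Vec3) : ℂ :=
  (θu L u x : ℂ) * φ x
    - ((L : ℂ) ^ 3)⁻¹ * (∫ y : Vec3, (θu L u y : ℂ) * φ y) * (θu L u x : ℂ)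

/-!
For fixed `k`, the function `u ↦ (χ_u Q_u f)^(k)` is, up to a phase, the correlation of `f` with a
kernel that does not depend on `f`. Plancherel's theorem in `u` therefore reduces the inequality to
a pointwise bound, in the frequency `p` of `f`, on a multiplier. In units where `L = 1` and with
`B = (4πs)⁻²`, this multiplier is `∫ (|k|² - B)_+ |χ̂(k - p) - χ̂(k) θ̂(-p)|² dk`.

For bounded `p`, subtracting the mean makes `χ̂(k - p) - χ̂(k) θ̂(-p)` vanish linearly at `p = 0`,
and `(|k|² - B)_+ ≤ |k|⁴ / B` makes the multiplier `O(|p|² / B)`. For large `p` the multiplier is,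
up to `O(1)`, at most the integral of `(|q + p|² - B)_+` against the symmetric measure
`|χ̂(q)|² dq` of mass at most one. This gives at most `3|p|²/4 + O(1)` when `|p|² ≤ 2B` and at most
`|p|² - B + O(1)` otherwise. In every case there is room for the term `b min(1, |p|²)` which
controls `‖Q_u f‖²`.
-/

open scoped FourierTransform SchwartzMap ENNReal RealInnerProductSpace LineDeriv

section Plancherel

variable {V F : Type*} [NormedAddCommGroup V] [InnerProductSpace ℝ V] [FiniteDimensional ℝ V]
  [MeasurableSpace V] [BorelSpace V] [NormedAddCommGroup F]

theorem continuous_fourier_of_integrable [NormedSpace ℂ F] {f : V → F} (hf : Integrable f) :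
    Continuous (𝓕 f) :=
  VectorFourier.fourierIntegral_continuous continuous_fourierChar (L := innerₗ V)
    continuous_inner hf

variable [InnerProductSpace ℂ F] [CompleteSpace F]

theorem fourier_toLp_ae_eq {f : V → F} (h1 : Integrable f) (h2 : MemLp f 2) :
    (𝓕 (h2.toLp f) : Lp F 2 (volume : Measure V)) =ᵐ[volume] 𝓕 f := by
  refine ae_eq_of_integral_contDiff_smul_eq ((Lp.memLp _).locallyIntegrable one_le_two)
    (continuous_fourier_of_integrable h1).locallyIntegrable fun g hg hgs => ?_
  have hgs' : HasCompactSupport (fun x => (g x : ℂ)) := hgs.comp_left Complex.ofReal_zero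
  let φ : 𝓢(V, ℂ) := hgs'.toSchwartzMap (Complex.ofRealCLM.contDiff.comp hg)
  have hφ (G : V → F) : ∫ x, g x • G x = ∫ x, φ x • G x := by congr! 2
  calc ∫ x, g x • (𝓕 (h2.toLp f) : Lp F 2 (volume : Measure V)) x
      = Lp.toTemperedDistribution (𝓕 (h2.toLp f)) φ := by
        rw [hφ, Lp.toTemperedDistribution_apply]
    _ = Lp.toTemperedDistribution (h2.toLp f) (𝓕 φ) := by
        rw [← TemperedDistribution.fourier_apply, Lp.fourier_toTemperedDistribution_eq]
    _ = ∫ x, 𝓕 φ x • f x := by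
        rw [Lp.toTemperedDistribution_apply]
        refine integral_congr_ae ?_
        filter_upwards [h2.coeFn_toLp] with x hx
        rw [hx]
    _ = ∫ x, φ x • 𝓕 f x := by
        simpa using! VectorFourier.integral_fourierIntegral_smul_eq_flip (L := innerₗ V)
          continuous_fourierChar continuous_inner φ.integrable h1
    _ = ∫ x, g x • 𝓕 f x := (hφ _).symm

theorem lintegral_enorm_sq_fourier {f : V → F} (h1 : Integrable f) (h2 : MemLp f 2) :
    ∫⁻ ξ, ‖𝓕 f ξ‖ₑ ^ 2 = ∫⁻ x, ‖f x‖ₑ ^ 2 := by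
  have hL2 {μ : Measure V} (g : V → F) : ∫⁻ x, ‖g x‖ₑ ^ 2 ∂μ = eLpNorm g 2 μ ^ 2 := by
    have := eLpNorm_nnreal_pow_eq_lintegral (f := g) (μ := μ) (p := 2) two_ne_zero
    simpa using this.symm
  rw [hL2, hL2, ← eLpNorm_congr_ae (fourier_toLp_ae_eq h1 h2), ← Lp.enorm_def, ← ofReal_norm,
    Lp.norm_fourier_eq, ofReal_norm, Lp.enorm_def, eLpNorm_congr_ae h2.coeFn_toLp]

end Plancherel

theorem memLp_two_of_integrable_of_norm_le {X E : Type*} [MeasurableSpace X] {μ : Measure X}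
    [NormedAddCommGroup E] {f : X → E} (hf : Integrable f μ) {C : ℝ} (hC : ∀ x, ‖f x‖ ≤ C) :
    MemLp f 2 μ := by
  refine (memLp_two_iff_integrable_sq_norm hf.1).2 ?_
  simpa only [sq] using hf.norm.bdd_mul hf.norm.1 (ae_of_all _ fun x => by simpa using hC x)

theorem lintegral_lintegral_mul_swap {X Y : Type*} [MeasurableSpace X] [MeasurableSpace Y]
    {μ : Measure X} {ν : Measure Y} [SFinite μ] [SFinite ν] {w : X → ℝ≥0∞} (hw : Measurable w)
    {G : X → Y → ℝ≥0∞} (hG : Measurable (Function.uncurry G)) :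
    ∫⁻ y, ∫⁻ x, w x * G x y ∂μ ∂ν = ∫⁻ x, w x * ∫⁻ y, G x y ∂ν ∂μ := by
  rw [lintegral_lintegral_swap
    ((hw.comp measurable_snd).mul (hG.comp measurable_swap)).aemeasurable]
  exact lintegral_congr fun x => lintegral_const_mul _ (hG.comp measurable_prodMk_left)

section Correlation

variable {V : Type*} [NormedAddCommGroup V] [InnerProductSpace ℝ V] [FiniteDimensional ℝ V]
  [MeasurableSpace V] [BorelSpace V] {f g : V → ℂ}

theorem convolution_comp_neg_mul (g f : V → ℂ) (u : V) :
    convolution (fun y => g (-y)) f (ContinuousLinearMap.mul ℂ ℂ) volume u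
      = ∫ y, g y * f (y + u) := by
  rw [convolution_mul, ← integral_neg_eq_self]
  simp only [neg_neg, sub_neg_eq_add, add_comm u]

theorem integrable_correlation (hg : Integrable g) (hf : Integrable f) :
    Integrable (fun u => ∫ y, g y * f (y + u)) := by
  simp_rw [← convolution_comp_neg_mul]
  exact hg.comp_neg.integrable_convolution _ hf

theorem fourier_correlation (hg : Integrable g) (hf : Integrable f) (ξ : V) :
    𝓕 (fun u => ∫ y, g y * f (y + u)) ξ = 𝓕 g (-ξ) * 𝓕 f ξ := by
  simp_rw [← convolution_comp_neg_mul]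
  rw [Real.fourier_mul_convolution_eq hg.comp_neg hf, ← Real.fourierInv_eq_fourier_comp_neg,
    Real.fourierInv_eq_fourier_neg]

theorem norm_correlation_le (hg : Integrable g) {C : ℝ} (hC : ∀ x, ‖f x‖ ≤ C) (u : V) :
    ‖∫ y, g y * f (y + u)‖ ≤ (∫ y, ‖g y‖) * C := by
  rw [← integral_mul_const]
  refine norm_integral_le_of_norm_le (hg.norm.mul_const C) (ae_of_all _ fun y => ?_)
  rw [norm_mul]
  exact mul_le_mul_of_nonneg_left (hC _) (norm_nonneg _)

theorem lintegral_enorm_sq_correlation (hg : Integrable g) (hf : Integrable f) {C : ℝ}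
    (hC : ∀ x, ‖f x‖ ≤ C) :
    ∫⁻ u, ‖∫ y, g y * f (y + u)‖ₑ ^ 2 = ∫⁻ ξ, ‖𝓕 g (-ξ)‖ₑ ^ 2 * ‖𝓕 f ξ‖ₑ ^ 2 := by
  have h := integrable_correlation hg hf
  rw [← lintegral_enorm_sq_fourier h
    (memLp_two_of_integrable_of_norm_le h (norm_correlation_le hg hC))]
  simp_rw [fourier_correlation hg hf, enorm_mul, mul_pow]

section Parametrized

variable {X : Type*} [MeasurableSpace X] {M : X → V → ℂ}

theorem measurable_fourier_uncurry (hM : Measurable (Function.uncurry M)) :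
    Measurable fun z : X × V => 𝓕 (M z.1) z.2 := by
  have hphase : Measurable fun t : ℝ => (𝐞 t : ℂ) :=
    (continuous_subtype_val.comp continuous_fourierChar).measurable
  have hkernel : Measurable fun q : (X × V) × V => (𝐞 (-⟪q.2, q.1.2⟫) : ℂ) * M q.1.1 q.2 :=
    (hphase.comp (by fun_prop)).mul (hM.comp (measurable_fst.fst.prodMk measurable_snd))
  exact hkernel.stronglyMeasurable.integral_prod_right'.measurable

theorem measurable_correlation_uncurry (hM : Measurable (Function.uncurry M))
    (hf : Measurable f) : Measurable fun z : X × V => ∫ y, M z.1 y * f (y + z.2) := by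
  have hkernel : Measurable fun q : (X × V) × V => M q.1.1 q.2 * f (q.2 + q.1.2) :=
    (hM.comp (measurable_fst.fst.prodMk measurable_snd)).mul
      (hf.comp (measurable_snd.add measurable_fst.snd))
  exact hkernel.stronglyMeasurable.integral_prod_right'.measurable

theorem lintegral_lintegral_enorm_sq_correlation {μ : Measure X} [SFinite μ] {w : X → ℝ≥0∞}
    (hw : Measurable w) (hM : Measurable (Function.uncurry M)) (hMi : ∀ k, Integrable (M k))
    (hfm : Measurable f) (hf : Integrable f) {C : ℝ} (hC : ∀ x, ‖f x‖ ≤ C) :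
    ∫⁻ u, ∫⁻ k, w k * ‖∫ y, M k y * f (y + u)‖ₑ ^ 2 ∂μ
      = ∫⁻ ξ, (∫⁻ k, w k * ‖𝓕 (M k) (-ξ)‖ₑ ^ 2 ∂μ) * ‖𝓕 f ξ‖ₑ ^ 2 := by
  have hcorr : Measurable (Function.uncurry fun k u => ‖∫ y, M k y * f (y + u)‖ₑ ^ 2) :=
    (measurable_correlation_uncurry hM hfm).enorm.pow_const 2
  have hfour : Measurable (Function.uncurry fun k ξ => ‖𝓕 (M k) (-ξ)‖ₑ ^ 2) :=
    ((measurable_fourier_uncurry hM).comp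
      (measurable_fst.prodMk measurable_snd.neg)).enorm.pow_const 2
  have hff : Measurable fun ξ => ‖𝓕 f ξ‖ₑ ^ 2 :=
    (continuous_fourier_of_integrable hf).measurable.enorm.pow_const 2
  have hprod : Measurable (Function.uncurry fun k ξ => ‖𝓕 (M k) (-ξ)‖ₑ ^ 2 * ‖𝓕 f ξ‖ₑ ^ 2) :=
    hfour.mul (hff.comp measurable_snd)
  calc ∫⁻ u, ∫⁻ k, w k * ‖∫ y, M k y * f (y + u)‖ₑ ^ 2 ∂μ
      = ∫⁻ k, w k * (∫⁻ u, ‖∫ y, M k y * f (y + u)‖ₑ ^ 2) ∂μ :=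
        lintegral_lintegral_mul_swap hw hcorr
    _ = ∫⁻ k, w k * (∫⁻ ξ, ‖𝓕 (M k) (-ξ)‖ₑ ^ 2 * ‖𝓕 f ξ‖ₑ ^ 2) ∂μ :=
        lintegral_congr fun k => by rw [lintegral_enorm_sq_correlation (hMi k) hf hC]
    _ = ∫⁻ ξ, (∫⁻ k, w k * (‖𝓕 (M k) (-ξ)‖ₑ ^ 2 * ‖𝓕 f ξ‖ₑ ^ 2) ∂μ) :=
        (lintegral_lintegral_mul_swap hw hprod).symm
    _ = ∫⁻ ξ, (∫⁻ k, w k * ‖𝓕 (M k) (-ξ)‖ₑ ^ 2 ∂μ) * ‖𝓕 f ξ‖ₑ ^ 2 :=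
        lintegral_congr fun ξ => by
          simp_rw [← mul_assoc]
          exact lintegral_mul_const _ (hw.mul hfour.of_uncurry_right)

end Parametrized

end Correlation

theorem norm_fourierChar_sub_le (x y : ℝ) : ‖(𝐞 x : ℂ) - 𝐞 y‖ ≤ 2 * π * |x - y| := by
  have h : (𝐞 x : ℂ) - 𝐞 y = 𝐞 y * (Complex.exp (Complex.I * (2 * π * (x - y) : ℝ)) - 1) := by
    simp only [Real.fourierChar_apply, mul_sub, mul_one, ← Complex.exp_add]
    congr 2
    push_cast
    ring
  rw [h, norm_mul, Circle.norm_coe, one_mul]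
  refine Real.norm_exp_I_mul_ofReal_sub_one_le.trans_eq ?_
  rw [Real.norm_eq_abs, abs_mul, abs_of_nonneg two_pi_pos.le]

theorem norm_sub_setIntegral_le {X E : Type*} [MeasurableSpace X] {μ : Measure X}
    [NormedAddCommGroup E] [NormedSpace ℝ E] [CompleteSpace E] {K : Set X} (hμK : μ K = 1)
    {w : X → E} (hw : IntegrableOn w K μ) {a : E} {C : ℝ} (hC : ∀ x ∈ K, ‖a - w x‖ ≤ C) :
    ‖a - ∫ x in K, w x ∂μ‖ ≤ C := by
  have hfin : μ K < ∞ := by simp [hμK]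
  have hreal : μ.real K = 1 := by simp [Measure.real, hμK]
  have hmean : a - ∫ x in K, w x ∂μ = ∫ x in K, (a - w x) ∂μ := by
    have ha : IntegrableOn (fun _ => a) K μ := integrableOn_const hfin.ne
    rw [integral_sub ha hw, setIntegral_const, hreal, one_smul]
  rw [hmean]
  simpa only [hreal, mul_one] using norm_setIntegral_le_of_norm_le_const hfin hC

section IndicatorOne

variable {X : Type*} [MeasurableSpace X] {μ : Measure X} {K : Set X}

theorem setIntegral_eq_integral_indicator_one_mul (hK : MeasurableSet K) (g : X → ℂ) :
    ∫ z in K, g z ∂μ = ∫ z, K.indicator 1 z * g z ∂μ := by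
  rw [← integral_indicator hK]
  congr with z
  by_cases hz : z ∈ K <;> simp [hz]

theorem integrable_indicator_one (hK : MeasurableSet K) (hKfin : μ K ≠ ∞) :
    Integrable (K.indicator (1 : X → ℂ)) μ :=
  (integrable_indicator_iff hK).2 (integrableOn_const hKfin)

end IndicatorOne

section Fluctuation

variable {V : Type*} [NormedAddCommGroup V] [InnerProductSpace ℝ V] [FiniteDimensional ℝ V]
  [MeasurableSpace V] [BorelSpace V] {K : Set V} {f : V → ℂ}

/-- The fluctuation `y ↦ f (y + u) - ∫_K f (z + u) dz` of `f` around its mean over the translate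
`K + u` of a set `K` of volume one, with the translate moved back to `K`. -/
def fluctuation (K : Set V) (f : V → ℂ) (u y : V) : ℂ :=
  f (y + u) - ∫ z in K, f (z + u)

theorem fourier_indicator_one_neg (hK : MeasurableSet K) (ξ : V) :
    𝓕 (K.indicator (1 : V → ℂ)) (-ξ) = ∫ z in K, (𝐞 ⟪z, ξ⟫ : ℂ) := by
  rw [Real.fourier_eq, setIntegral_eq_integral_indicator_one_mul hK]
  simp only [Circle.smul_def, smul_eq_mul, inner_neg_right, neg_neg, mul_comm]

theorem norm_sub_fourier_indicator_one_neg_le (hK : MeasurableSet K) (hK1 : volume K = 1)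
    {a : ℂ} {ξ : V} {C : ℝ} (hC : ∀ z ∈ K, ‖a - 𝐞 ⟪z, ξ⟫‖ ≤ C) :
    ‖a - 𝓕 (K.indicator (1 : V → ℂ)) (-ξ)‖ ≤ C := by
  have hphase : Continuous fun z : V => (𝐞 ⟪z, ξ⟫ : ℂ) :=
    continuous_subtype_val.comp (continuous_fourierChar.comp (by fun_prop))
  rw [fourier_indicator_one_neg hK]
  exact norm_sub_setIntegral_le hK1
    (.of_bound (by simp [hK1]) hphase.aestronglyMeasurable 1
      (ae_of_all _ fun z => (Circle.norm_coe _).le)) hC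

theorem norm_fourier_indicator_one_neg_le (hK : MeasurableSet K) (hK1 : volume K = 1) (ξ : V) :
    ‖𝓕 (K.indicator (1 : V → ℂ)) (-ξ)‖ ≤ 1 := by
  simpa using! norm_sub_fourier_indicator_one_neg_le hK hK1 (a := 0) (ξ := ξ) (C := 1)
    fun _ _ => by rw [zero_sub, norm_neg, Circle.norm_coe]

theorem norm_fourierChar_sub_fourier_indicator_le_two (hK : MeasurableSet K)
    (hK1 : volume K = 1) (y ξ : V) :
    ‖(𝐞 ⟪y, ξ⟫ : ℂ) - 𝓕 (K.indicator (1 : V → ℂ)) (-ξ)‖ ≤ 2 :=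
  norm_sub_fourier_indicator_one_neg_le hK hK1 fun _ _ =>
    (norm_sub_le _ _).trans_eq (by simp only [Circle.norm_coe, one_add_one_eq_two])

theorem norm_fourierChar_sub_fourier_indicator_le (hK : MeasurableSet K) (hK1 : volume K = 1)
    {r : ℝ} (hr : ∀ z ∈ K, ‖z‖ ≤ r) (y ξ : V) :
    ‖(𝐞 ⟪y, ξ⟫ : ℂ) - 𝓕 (K.indicator (1 : V → ℂ)) (-ξ)‖ ≤ 2 * π * (‖y‖ + r) * ‖ξ‖ :=
  norm_sub_fourier_indicator_one_neg_le hK hK1 fun z hz => by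
    have hz' : ‖y - z‖ ≤ ‖y‖ + r := (norm_sub_le _ _).trans (by gcongr; exact hr z hz)
    calc ‖(𝐞 ⟪y, ξ⟫ : ℂ) - 𝐞 ⟪z, ξ⟫‖
        ≤ 2 * π * |⟪y - z, ξ⟫| := by
          rw [inner_sub_left]
          exact norm_fourierChar_sub_le _ _
      _ ≤ 2 * π * (‖y - z‖ * ‖ξ‖) := by gcongr; exact abs_real_inner_le_norm _ _
      _ ≤ 2 * π * (‖y‖ + r) * ‖ξ‖ := by rw [mul_assoc (2 * π)]; gcongr

theorem fluctuation_eq (hK : MeasurableSet K) (u y : V) :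
    fluctuation K f u y = f (y + u) - ∫ z, K.indicator 1 z * f (z + u) := by
  rw [fluctuation, setIntegral_eq_integral_indicator_one_mul hK]

theorem integrable_fluctuation (hK : MeasurableSet K) (hKfin : volume K ≠ ∞)
    (hf : Integrable f) (y : V) : Integrable (fun u => fluctuation K f u y) := by
  simp_rw [fluctuation_eq hK, add_comm y]
  exact (hf.comp_add_right y).sub (integrable_correlation (integrable_indicator_one hK hKfin) hf)

theorem fourier_comp_add_left (f : V → ℂ) (y ξ : V) :
    𝓕 (fun u => f (y + u)) ξ = 𝐞 ⟪y, ξ⟫ * 𝓕 f ξ := by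
  simp_rw [add_comm y]
  exact congrFun (VectorFourier.fourierIntegral_comp_add_right 𝐞 volume (innerₗ V) f y) ξ

theorem fourier_fluctuation (hK : MeasurableSet K) (hKfin : volume K ≠ ∞) (hf : Integrable f)
    (y ξ : V) :
    𝓕 (fun u => fluctuation K f u y) ξ
      = (𝐞 ⟪y, ξ⟫ - 𝓕 (K.indicator (1 : V → ℂ)) (-ξ)) * 𝓕 f ξ := by
  have hκ := integrable_indicator_one hK hKfin
  have hshift : Integrable fun u => f (y + u) := by
    simpa only [add_comm y] using hf.comp_add_right y
  have hdiff : 𝓕 (fun u => fluctuation K f u y) ξ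
      = 𝓕 (fun u => f (y + u)) ξ - 𝓕 (fun u => ∫ z, K.indicator 1 z * f (z + u)) ξ := by
    simp_rw [fluctuation_eq hK, Real.fourier_eq, smul_sub]
    exact integral_sub ((Real.fourierIntegral_convergent_iff ξ).2 hshift)
      ((Real.fourierIntegral_convergent_iff ξ).2 (integrable_correlation hκ hf))
  rw [hdiff, fourier_comp_add_left, fourier_correlation hκ hf, sub_mul]

theorem norm_fluctuation_le (hK1 : volume K = 1) (hf : Integrable f) {C : ℝ}
    (hC : ∀ x, ‖f x‖ ≤ C) (u y : V) : ‖fluctuation K f u y‖ ≤ C + C :=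
  norm_sub_setIntegral_le hK1 (hf.comp_add_right u).integrableOn fun _ _ =>
    norm_sub_le_of_le (hC _) (hC _)

theorem lintegral_enorm_sq_fluctuation (hK : MeasurableSet K) (hK1 : volume K = 1)
    (hf : Integrable f) {C : ℝ} (hC : ∀ x, ‖f x‖ ≤ C) (y : V) :
    ∫⁻ u, ‖fluctuation K f u y‖ₑ ^ 2
      = ∫⁻ ξ, ‖(𝐞 ⟪y, ξ⟫ : ℂ) - 𝓕 (K.indicator (1 : V → ℂ)) (-ξ)‖ₑ ^ 2 * ‖𝓕 f ξ‖ₑ ^ 2 := by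
  have hKfin : volume K ≠ ∞ := by simp [hK1]
  have hint := integrable_fluctuation hK hKfin hf y
  rw [← lintegral_enorm_sq_fourier hint
    (memLp_two_of_integrable_of_norm_le hint fun u => norm_fluctuation_le hK1 hf hC u y)]
  simp_rw [fourier_fluctuation hK hKfin hf, enorm_mul, mul_pow]

theorem measurable_fluctuation (hf : Measurable f) :
    Measurable (Function.uncurry (fluctuation K f)) := by
  have hshift : Measurable fun q : V × V => f (q.2 + q.1) := hf.comp (by fun_prop)
  have hmean : Measurable fun u => ∫ z in K, f (z + u) :=
    hshift.stronglyMeasurable.integral_prod_right'.measurable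
  exact hshift.sub (hmean.comp measurable_fst)

theorem lintegral_setLIntegral_enorm_sq_fluctuation_le (hK : MeasurableSet K)
    (hK1 : volume K = 1) {r : ℝ} (hr : ∀ z ∈ K, ‖z‖ ≤ r) (hfm : Measurable f)
    (hf : Integrable f) {C : ℝ} (hC : ∀ x, ‖f x‖ ≤ C) :
    ∫⁻ u, ∫⁻ y in K, ‖fluctuation K f u y‖ₑ ^ 2
      ≤ ∫⁻ ξ, ENNReal.ofReal (min 2 (2 * π * (r + r) * ‖ξ‖) ^ 2) * ‖𝓕 f ξ‖ₑ ^ 2 := by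
  have hsymbol {y : V} (hy : y ∈ K) (ξ : V) :
      ‖(𝐞 ⟪y, ξ⟫ : ℂ) - 𝓕 (K.indicator (1 : V → ℂ)) (-ξ)‖ₑ ^ 2
        ≤ ENNReal.ofReal (min 2 (2 * π * (r + r) * ‖ξ‖) ^ 2) := by
    rw [← ofReal_norm, ← ENNReal.ofReal_pow (norm_nonneg _)]
    gcongr
    refine le_min (norm_fourierChar_sub_fourier_indicator_le_two hK hK1 y ξ)
      ((norm_fourierChar_sub_fourier_indicator_le hK hK1 hr y ξ).trans ?_)
    gcongr
    exact hr y hy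
  rw [lintegral_lintegral_swap ((measurable_fluctuation hfm).enorm.pow_const 2).aemeasurable]
  calc ∫⁻ y in K, ∫⁻ u, ‖fluctuation K f u y‖ₑ ^ 2
      ≤ ∫⁻ _ in K, ∫⁻ ξ, ENNReal.ofReal (min 2 (2 * π * (r + r) * ‖ξ‖) ^ 2)
          * ‖𝓕 f ξ‖ₑ ^ 2 := by
        refine setLIntegral_mono' hK fun y hy => ?_
        rw [lintegral_enorm_sq_fluctuation hK hK1 hf hC]
        gcongr with ξ
        exact hsymbol hy ξ
    _ = _ := by rw [setLIntegral_const, hK1, mul_one]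

end Fluctuation

section BoxMultiplier

variable {V : Type*} [NormedAddCommGroup V] [InnerProductSpace ℝ V] [FiniteDimensional ℝ V]
  [MeasurableSpace V] [BorelSpace V] {K : Set V} {χ f : V → ℂ}

/-- The kernel `g_k` for which the Fourier transform at `k` of `χ` times the fluctuation of `f`
over `K + u` is the correlation `∫ g_k(y) f(y + u) dy`. -/
def boxKernel (K : Set V) (χ : V → ℂ) (k y : V) : ℂ :=
  𝐞 (-⟪y, k⟫) * χ y - 𝓕 χ k * K.indicator 1 y

/-- The multiplier through which the Fourier mode `p` of `f` contributes to the mode `k` of the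
product of `χ` with the fluctuation of `f` over a translate of `K`. -/
def boxMultiplier (K : Set V) (χ : V → ℂ) (k p : V) : ℂ :=
  𝓕 χ (k - p) - 𝓕 χ k * 𝓕 (K.indicator (1 : V → ℂ)) (-p)

theorem measurable_boxKernel (hK : MeasurableSet K) (hχm : Measurable χ) (hχ : Integrable χ) :
    Measurable (Function.uncurry (boxKernel K χ)) := by
  have hphase : Continuous fun q : V × V => (𝐞 (-⟪q.2, q.1⟫) : ℂ) :=
    continuous_subtype_val.comp (continuous_fourierChar.comp (by fun_prop))
  have hfour := (continuous_fourier_of_integrable hχ).measurable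
  exact (hphase.measurable.mul (hχm.comp measurable_snd)).sub
    ((hfour.comp measurable_fst).mul ((measurable_one.indicator hK).comp measurable_snd))

theorem integrable_fourierChar_mul (hχ : Integrable χ) (k : V) :
    Integrable fun y => (𝐞 (-⟪y, k⟫) : ℂ) * χ y :=
  (Real.fourierIntegral_convergent_iff k).2 hχ

theorem integrable_boxKernel (hK : MeasurableSet K) (hKfin : volume K ≠ ∞) (hχ : Integrable χ)
    (k : V) : Integrable (boxKernel K χ k) :=
  (integrable_fourierChar_mul hχ k).sub ((integrable_indicator_one hK hKfin).const_mul _)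

theorem fourier_boxKernel_neg (hK : MeasurableSet K) (hKfin : volume K ≠ ∞) (hχ : Integrable χ)
    (k p : V) : 𝓕 (boxKernel K χ k) (-p) = boxMultiplier K χ k p := by
  have hphase (y : V) : (𝐞 (-⟪y, k - p⟫) : ℂ) = 𝐞 (-⟪y, -p⟫) * 𝐞 (-⟪y, k⟫) := by
    rw [← Circle.coe_mul, ← AddChar.map_add_eq_mul, ← neg_add, ← inner_add_right, neg_add_eq_sub]
  simp only [boxMultiplier, Real.fourier_eq, Circle.smul_def, smul_eq_mul]
  rw [← integral_const_mul, ← integral_sub (integrable_fourierChar_mul hχ _)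
    ((integrable_fourierChar_mul (integrable_indicator_one hK hKfin) _).const_mul _)]
  refine integral_congr_ae (ae_of_all _ fun y => ?_)
  simp only [boxKernel, hphase, Real.fourier_eq, Circle.smul_def, smul_eq_mul]
  ring

theorem fourier_mul_fluctuation (hK : MeasurableSet K) (hKfin : volume K ≠ ∞)
    (hχ : Integrable χ) (hf : AEStronglyMeasurable f) {C : ℝ} (hC : ∀ x, ‖f x‖ ≤ C) (u k : V) :
    𝓕 (fun y => χ y * fluctuation K f u y) k = ∫ y, boxKernel K χ k y * f (y + u) := by
  have hshift : AEStronglyMeasurable (fun y => f (y + u)) volume :=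
    hf.comp_measurePreserving (measurePreserving_add_right volume u)
  have hmul {g : V → ℂ} (hg : Integrable g) : Integrable fun y => g y * f (y + u) :=
    hg.mul_bdd hshift (ae_of_all _ fun y => hC (y + u))
  have hκ := integrable_indicator_one hK hKfin
  have hphase := integrable_fourierChar_mul hχ k
  calc 𝓕 (fun y => χ y * fluctuation K f u y) k
      = ∫ y, (𝐞 (-⟪y, k⟫) * χ y * f (y + u)
          - 𝐞 (-⟪y, k⟫) * χ y * ∫ z, K.indicator 1 z * f (z + u)) := by
        simp only [Real.fourier_eq, Circle.smul_def, smul_eq_mul, fluctuation_eq hK, mul_sub,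
          mul_assoc]
    _ = (∫ y, 𝐞 (-⟪y, k⟫) * χ y * f (y + u))
          - 𝓕 χ k * ∫ z, K.indicator 1 z * f (z + u) := by
        rw [integral_sub (hmul hphase) (hphase.mul_const _), integral_mul_const]
        rfl
    _ = ∫ y, boxKernel K χ k y * f (y + u) := by
        simp only [boxKernel, sub_mul]
        rw [integral_sub (hmul hphase) (hmul (hκ.const_mul _))]
        simp only [mul_assoc, integral_const_mul]

theorem lintegral_lintegral_enorm_sq_fourier_mul_fluctuation (hK : MeasurableSet K)
    (hKfin : volume K ≠ ∞) (hχm : Measurable χ) (hχ : Integrable χ) (hfm : Measurable f)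
    (hf : Integrable f) {C : ℝ} (hC : ∀ x, ‖f x‖ ≤ C) {w : V → ℝ≥0∞} (hw : Measurable w) :
    ∫⁻ u, ∫⁻ k, w k * ‖𝓕 (fun y => χ y * fluctuation K f u y) k‖ₑ ^ 2
      = ∫⁻ p, (∫⁻ k, w k * ‖boxMultiplier K χ k p‖ₑ ^ 2) * ‖𝓕 f p‖ₑ ^ 2 := by
  simp_rw [fourier_mul_fluctuation hK hKfin hχ hfm.aestronglyMeasurable hC,
    ← fourier_boxKernel_neg hK hKfin hχ]
  exact lintegral_lintegral_enorm_sq_correlation hw (measurable_boxKernel hK hχm hχ)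
    (integrable_boxKernel hK hKfin hχ) hfm hf hC

end BoxMultiplier

section QuadraticBounds

variable {V : Type*} [NormedAddCommGroup V] [InnerProductSpace ℝ V] {q p : V} {B : ℝ}

theorem max_norm_add_sq_sub_le_of_le (hp : ‖p‖ ^ 2 ≤ 2 * B) :
    max (‖q + p‖ ^ 2 - B) 0 ≤ 3 / 4 * ‖p‖ ^ 2 + 5 * ‖q‖ ^ 2 := by
  have hinner := real_inner_le_norm q p
  refine max_le ?_ (by positivity)
  rw [norm_add_sq_real]
  nlinarith [sq_nonneg (‖p‖ - 4 * ‖q‖)]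

theorem max_norm_add_sq_sub_le_of_ge (hp : 2 * B ≤ ‖p‖ ^ 2) :
    max (‖q + p‖ ^ 2 - B) 0 ≤ (‖p‖ ^ 2 - B) + 2 * ⟪q, p⟫ + 5 * ‖q‖ ^ 2 := by
  have hinner := neg_le_of_abs_le (abs_real_inner_le_norm q p)
  refine max_le ?_ ?_
  · rw [norm_add_sq_real]
    nlinarith [sq_nonneg ‖q‖]
  · nlinarith [sq_nonneg (‖p‖ - 2 * ‖q‖)]

theorem max_sq_sub_le_pow_four_div {t B : ℝ} (ht : 0 ≤ t) (hB : 0 < B) :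
    max (t ^ 2 - B) 0 ≤ (1 + t) ^ 4 / B := by
  refine max_le ?_ (by positivity)
  have ht4 : t ^ 4 ≤ (1 + t) ^ 4 := by gcongr; linarith
  rw [le_div_iff₀ hB]
  nlinarith [ht4, sq_nonneg (t ^ 2 - B), sq_nonneg (t ^ 2)]

theorem div_mul_min_two_sq_le {D t : ℝ} (hD : 0 ≤ D) (ht : 0 ≤ t) :
    1 / (8 * (D ^ 2 + 1)) * min 2 (D * t) ^ 2 ≤ min 1 (1 / 8 * t ^ 2) := by
  have htwo : min 2 (D * t) ^ 2 ≤ 2 ^ 2 := by gcongr; exact min_le_left _ _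
  have hlin : min 2 (D * t) ^ 2 ≤ (D * t) ^ 2 := by gcongr; exact min_le_right _ _
  rw [div_mul_eq_mul_div, div_le_iff₀ (by positivity), min_mul_of_nonneg _ _ (by positivity)]
  refine le_min ?_ ?_
  · nlinarith [htwo, sq_nonneg D]
  · nlinarith [hlin, sq_nonneg t]

end QuadraticBounds

theorem norm_sub_mul_sq_le {a b c : ℂ} {M : ℝ} (ha : ‖a‖ ≤ M) (hb : ‖b‖ ≤ M) (hc : ‖c‖ ≤ 1) :
    ‖a - b * c‖ ^ 2 ≤ ‖a‖ ^ 2 + 3 * M * ‖b‖ := by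
  have hsub : ‖a - b * c‖ ≤ ‖a‖ + ‖b‖ := by
    refine (norm_sub_le _ _).trans ?_
    rw [norm_mul]
    gcongr
    exact mul_le_of_le_one_right (norm_nonneg b) hc
  nlinarith [norm_nonneg a, norm_nonneg b, norm_nonneg (a - b * c)]

theorem lintegral_ofReal_mul_enorm_sq_le {X E : Type*} [MeasurableSpace X] {μ : Measure X}
    [SeminormedAddCommGroup E] {w G : X → ℝ} {g : X → E} (hw : ∀ k, 0 ≤ w k)
    (hG : Integrable G μ) (h : ∀ k, w k * ‖g k‖ ^ 2 ≤ G k) :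
    ∫⁻ k, ENNReal.ofReal (w k) * ‖g k‖ₑ ^ 2 ∂μ ≤ ENNReal.ofReal (∫ k, G k ∂μ) := by
  have hnonneg (k : X) : 0 ≤ w k * ‖g k‖ ^ 2 := mul_nonneg (hw k) (sq_nonneg _)
  rw [ofReal_integral_eq_lintegral_ofReal hG (ae_of_all _ fun k => (hnonneg k).trans (h k))]
  refine lintegral_mono fun k => ?_
  rw [← ofReal_norm, ← ENNReal.ofReal_pow (norm_nonneg _), ← ENNReal.ofReal_mul (hw k)]
  exact ENNReal.ofReal_le_ofReal (h k)

section SchwartzDecay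

variable {E : Type*} [NormedAddCommGroup E] [NormedSpace ℝ E]

theorem exists_one_add_norm_pow_mul_norm_sub_le {F : Type*} [NormedAddCommGroup F]
    [NormedSpace ℝ F] (X : 𝓢(E, F)) (m : ℕ) {R : ℝ} (hR : 0 ≤ R) :
    ∃ D ≥ (0 : ℝ), ∀ k p, ‖p‖ ≤ R → (1 + ‖k‖) ^ m * ‖X (k - p) - X k‖ ≤ D * ‖p‖ := by
  obtain ⟨M, hM⟩ : ∃ M, ∀ y, (1 + ‖y‖) ^ m * ‖fderiv ℝ X y‖ ≤ M := by
    simp_rw [← norm_iteratedFDeriv_one]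
    exact ⟨_, X.one_add_le_sup_seminorm_apply (𝕜 := ℝ) (m := (m, 1)) le_rfl le_rfl⟩
  have hM0 : 0 ≤ M := le_trans (by positivity) (hM 0)
  refine ⟨(1 + R) ^ m * M, by positivity, fun k p hp => ?_⟩
  have hk : 0 < (1 + ‖k‖) ^ m := by positivity
  have hbound : ∀ y ∈ Metric.closedBall k R,
      ‖fderiv ℝ X y‖ ≤ (1 + R) ^ m * M / (1 + ‖k‖) ^ m := by
    intro y hy
    have hky : 1 + ‖k‖ ≤ (1 + R) * (1 + ‖y‖) := by
      have := norm_le_norm_add_norm_sub' k y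
      rw [mem_closedBall_iff_norm'] at hy
      nlinarith [norm_nonneg y]
    rw [le_div_iff₀ hk]
    calc ‖fderiv ℝ X y‖ * (1 + ‖k‖) ^ m
        ≤ ‖fderiv ℝ X y‖ * ((1 + R) * (1 + ‖y‖)) ^ m := by gcongr
      _ = (1 + R) ^ m * ((1 + ‖y‖) ^ m * ‖fderiv ℝ X y‖) := by rw [mul_pow]; ring
      _ ≤ (1 + R) ^ m * M := by gcongr; exact hM y
  have h := (convex_closedBall k R).norm_image_sub_le_of_norm_fderiv_le
    (fun x _ => X.differentiableAt) hbound (Metric.mem_closedBall_self hR)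
    (y := k - p) (by simpa [dist_eq_norm] using hp)
  rw [sub_sub_cancel_left, norm_neg, div_mul_eq_mul_div, le_div_iff₀ hk] at h
  linarith

theorem exists_one_add_norm_pow_mul_norm_sub_mul_le (X : 𝓢(E, ℂ)) (m : ℕ) {R D : ℝ}
    (hR : 0 ≤ R) (hD : 0 ≤ D) :
    ∃ D' ≥ (0 : ℝ), ∀ k p c, ‖p‖ ≤ R → ‖1 - c‖ ≤ D * ‖p‖ →
      (1 + ‖k‖) ^ m * ‖X (k - p) - X k * c‖ ≤ D' * ‖p‖ := by
  obtain ⟨D₁, hD₁, hshift⟩ := exists_one_add_norm_pow_mul_norm_sub_le X m hR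
  obtain ⟨M, hM⟩ : ∃ M, ∀ k, (1 + ‖k‖) ^ m * ‖X k‖ ≤ M := by
    simp_rw [← norm_iteratedFDeriv_zero (𝕜 := ℝ) (f := X)]
    exact ⟨_, X.one_add_le_sup_seminorm_apply (𝕜 := ℝ) (m := (m, 0)) le_rfl le_rfl⟩
  have hM0 : 0 ≤ M := le_trans (by positivity) (hM 0)
  refine ⟨D₁ + M * D, by positivity, fun k p c hp hc => ?_⟩
  calc (1 + ‖k‖) ^ m * ‖X (k - p) - X k * c‖
      = (1 + ‖k‖) ^ m * ‖(X (k - p) - X k) + X k * (1 - c)‖ := by ring_nf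
    _ ≤ (1 + ‖k‖) ^ m * (‖X (k - p) - X k‖ + ‖X k‖ * ‖1 - c‖) := by
        gcongr
        exact norm_add_le_of_le le_rfl (norm_mul_le _ _)
    _ = (1 + ‖k‖) ^ m * ‖X (k - p) - X k‖ + (1 + ‖k‖) ^ m * ‖X k‖ * ‖1 - c‖ := by ring
    _ ≤ D₁ * ‖p‖ + M * (D * ‖p‖) := by
        refine add_le_add (hshift k p hp) ?_
        gcongr
        exact hM k
    _ = (D₁ + M * D) * ‖p‖ := by ring

end SchwartzDecay

section MultiplierBounds

variable {V : Type*} [NormedAddCommGroup V] [InnerProductSpace ℝ V] [FiniteDimensional ℝ V]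
  [MeasurableSpace V] [BorelSpace V]

theorem integral_inner_mul_eq_zero {φ : V → ℝ} (hφ : ∀ q, φ (-q) = φ q) (p : V) :
    ∫ q, ⟪q, p⟫ * φ q = 0 := by
  have h := integral_neg_eq_self (fun q => ⟪q, p⟫ * φ q) (volume : Measure V)
  simp only [inner_neg_left, hφ, neg_mul, integral_neg] at h
  linarith

theorem integrable_pow_mul_norm_sq (X : 𝓢(V, ℂ)) (n : ℕ) :
    Integrable fun q => ‖q‖ ^ n * ‖X q‖ ^ 2 := by
  have h := (X.integrable_pow_mul volume n).mul_bdd X.continuous.norm.aestronglyMeasurable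
    (ae_of_all _ fun q => (norm_norm _).trans_le (X.norm_le_seminorm ℝ q))
  simpa only [mul_assoc, ← sq] using h

theorem integrable_inner_mul_norm_sq (X : 𝓢(V, ℂ)) (p : V) :
    Integrable fun q => ⟪q, p⟫ * ‖X q‖ ^ 2 := by
  refine ((integrable_pow_mul_norm_sq X 1).const_mul ‖p‖).mono'
    (by fun_prop) (ae_of_all _ fun q => ?_)
  rw [norm_mul, norm_pow, norm_norm, pow_one, ← mul_assoc, mul_comm ‖p‖]
  gcongr
  exact norm_inner_le_norm q p

theorem integral_quadratic_mul_norm_sq_le {X : 𝓢(V, ℂ)} (hXsymm : ∀ q, ‖X (-q)‖ = ‖X q‖)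
    (hX1 : ∫ q, ‖X q‖ ^ 2 ≤ 1) (p : V) {α : ℝ} (hα : 0 ≤ α) (β γ : ℝ) :
    Integrable (fun q => (α + β * ⟪q, p⟫ + γ * ‖q‖ ^ 2) * ‖X q‖ ^ 2) ∧
    ∫ q, (α + β * ⟪q, p⟫ + γ * ‖q‖ ^ 2) * ‖X q‖ ^ 2 ≤ α + γ * ∫ q, ‖q‖ ^ 2 * ‖X q‖ ^ 2 := by
  have hα' : Integrable fun q => α * ‖X q‖ ^ 2 := by
    simpa using (integrable_pow_mul_norm_sq X 0).const_mul α
  have hβ := (integrable_inner_mul_norm_sq X p).const_mul β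
  have hγ := (integrable_pow_mul_norm_sq X 2).const_mul γ
  simp only [add_mul, mul_assoc]
  have hαβ : Integrable fun q => α * ‖X q‖ ^ 2 + β * (⟪q, p⟫ * ‖X q‖ ^ 2) := hα'.add hβ
  refine ⟨hαβ.add hγ, ?_⟩
  rw [integral_add hαβ hγ, integral_add hα' hβ]
  simp only [integral_const_mul]
  rw [integral_inner_mul_eq_zero fun q => by rw [hXsymm]]
  nlinarith

theorem exists_lintegral_translate_sub_mul_le_of_le_quadratic {X : 𝓢(V, ℂ)}
    (hXsymm : ∀ q, ‖X (-q)‖ = ‖X q‖) (hX1 : ∫ q, ‖X q‖ ^ 2 ≤ 1) {γ : ℝ} (hγ : 0 ≤ γ) :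
    ∃ C ≥ (0 : ℝ), ∀ (w : V → ℝ) (p : V) (c : ℂ) (α β : ℝ), 0 ≤ α → ‖c‖ ≤ 1 → (∀ q, 0 ≤ w q) →
      (∀ q, w q ≤ ‖q‖ ^ 2) → (∀ q, w (q + p) ≤ α + β * ⟪q, p⟫ + γ * ‖q‖ ^ 2) →
      ∫⁻ k, ENNReal.ofReal (w k) * ‖X (k - p) - X k * c‖ₑ ^ 2 ≤ ENNReal.ofReal (α + C) := by
  obtain ⟨M, hM⟩ : ∃ M, ∀ q, ‖X q‖ ≤ M := ⟨_, X.norm_le_seminorm ℝ⟩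
  have hM0 : 0 ≤ M := (norm_nonneg _).trans (hM 0)
  have htail : Integrable fun k => 3 * M * (‖k‖ ^ 2 * ‖X k‖) :=
    (X.integrable_pow_mul volume 2).const_mul _
  refine ⟨γ * (∫ q, ‖q‖ ^ 2 * ‖X q‖ ^ 2) + ∫ k, 3 * M * (‖k‖ ^ 2 * ‖X k‖), by positivity, ?_⟩
  intro w p c α β hα hc hw0 hw hwp
  obtain ⟨hmain, hmain_le⟩ := integral_quadratic_mul_norm_sq_le hXsymm hX1 p hα β γ
  set Q : V → ℝ := fun q => (α + β * ⟪q, p⟫ + γ * ‖q‖ ^ 2) * ‖X q‖ ^ 2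
  have hpoint (k : V) : w k * ‖X (k - p) - X k * c‖ ^ 2
      ≤ Q (k - p) + 3 * M * (‖k‖ ^ 2 * ‖X k‖) :=
    calc w k * ‖X (k - p) - X k * c‖ ^ 2
        ≤ w k * (‖X (k - p)‖ ^ 2 + 3 * M * ‖X k‖) :=
          mul_le_mul_of_nonneg_left (norm_sub_mul_sq_le (hM _) (hM _) hc) (hw0 k)
      _ = w (k - p + p) * ‖X (k - p)‖ ^ 2 + 3 * M * (w k * ‖X k‖) := by
          rw [sub_add_cancel]
          ring
      _ ≤ Q (k - p) + 3 * M * (‖k‖ ^ 2 * ‖X k‖) := by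
          gcongr
          exacts [mul_le_mul_of_nonneg_right (hwp _) (sq_nonneg _), hw k]
  refine (lintegral_ofReal_mul_enorm_sq_le hw0 ((hmain.comp_sub_right p).add htail)
    hpoint).trans (ENNReal.ofReal_le_ofReal ?_)
  simp only [Pi.add_apply]
  rw [integral_add (hmain.comp_sub_right p) htail, integral_sub_right_eq_self Q p]
  linarith

theorem exists_lintegral_translate_sub_mul_le_of_norm_le (X : 𝓢(V, ℂ)) {R D : ℝ}
    (hR : 0 ≤ R) (hD : 0 ≤ D) :
    ∃ C ≥ (0 : ℝ), ∀ (B : ℝ) (p : V) (c : ℂ), 0 < B → ‖p‖ ≤ R → ‖1 - c‖ ≤ D * ‖p‖ →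
      ∫⁻ k, ENNReal.ofReal (max (‖k‖ ^ 2 - B) 0) * ‖X (k - p) - X k * c‖ₑ ^ 2
        ≤ ENNReal.ofReal (C / B * ‖p‖ ^ 2) := by
  set n := Module.finrank ℝ V
  -- `2 (n + 3) = 4 + (2 n + 2)`: the weight costs `4`, and `2 n + 2 > n` leaves an integrable tail.
  obtain ⟨D', -, hdecay⟩ := exists_one_add_norm_pow_mul_norm_sub_mul_le X (n + 3) hR hD
  have hint : Integrable fun k : V => ((1 + ‖k‖) ^ (2 * n + 2))⁻¹ := by
    have h := integrable_one_add_norm (E := V) (μ := volume) (r := (2 * n + 2 : ℕ))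
      (by exact_mod_cast (by lia : n < 2 * n + 2))
    refine h.congr (ae_of_all _ fun k => ?_)
    dsimp only
    rw [Real.rpow_neg (by positivity), Real.rpow_natCast]
  refine ⟨D' ^ 2 * ∫ k : V, ((1 + ‖k‖) ^ (2 * n + 2))⁻¹, by positivity, fun B p c hB hp hc => ?_⟩
  have hpoint (k : V) : max (‖k‖ ^ 2 - B) 0 * ‖X (k - p) - X k * c‖ ^ 2
      ≤ (D' * ‖p‖) ^ 2 / B * ((1 + ‖k‖) ^ (2 * n + 2))⁻¹ := by
    calc max (‖k‖ ^ 2 - B) 0 * ‖X (k - p) - X k * c‖ ^ 2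
        ≤ (1 + ‖k‖) ^ 4 / B * ‖X (k - p) - X k * c‖ ^ 2 := by
          gcongr
          exact max_sq_sub_le_pow_four_div (norm_nonneg k) hB
      _ = ((1 + ‖k‖) ^ (n + 3) * ‖X (k - p) - X k * c‖) ^ 2 / B
            * ((1 + ‖k‖) ^ (2 * n + 2))⁻¹ := by
          field_simp
          ring
      _ ≤ (D' * ‖p‖) ^ 2 / B * ((1 + ‖k‖) ^ (2 * n + 2))⁻¹ := by
          gcongr ?_ ^ 2 / _ * _
          exact hdecay k p c hp hc
  refine (lintegral_ofReal_mul_enorm_sq_le (fun k => le_max_right _ _) (hint.const_mul _)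
    hpoint).trans_eq ?_
  rw [integral_const_mul]
  ring_nf

theorem exists_lintegral_translate_sub_mul_add_le {X : 𝓢(V, ℂ)}
    (hXsymm : ∀ q, ‖X (-q)‖ = ‖X q‖) (hX1 : ∫ q, ‖X q‖ ^ 2 ≤ 1) {D : ℝ} (hD : 0 ≤ D) :
    ∃ b > (0 : ℝ), ∃ B₀ > (0 : ℝ), ∀ B ≥ B₀, ∀ (p : V) (c : ℂ), ‖c‖ ≤ 1 → ‖1 - c‖ ≤ D * ‖p‖ →
      (∫⁻ k, ENNReal.ofReal (max (‖k‖ ^ 2 - B) 0) * ‖X (k - p) - X k * c‖ₑ ^ 2)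
        + ENNReal.ofReal (b * min 2 (D * ‖p‖) ^ 2) ≤ ENNReal.ofReal (‖p‖ ^ 2) := by
  obtain ⟨C, hC, hquadratic⟩ := exists_lintegral_translate_sub_mul_le_of_le_quadratic hXsymm hX1
    (γ := 5) (by norm_num)
  obtain ⟨C', hC', hlow⟩ :=
    exists_lintegral_translate_sub_mul_le_of_norm_le X (sqrt_nonneg (8 * C)) hD
  refine ⟨1 / (8 * (D ^ 2 + 1)), by positivity, C + 1 + 2 * C', by positivity, ?_⟩
  intro B hB p c hc hc'
  have hB0 : 0 < B := by linarith
  set b := 1 / (8 * (D ^ 2 + 1))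
  obtain ⟨hfluct, hfluct'⟩ : b * min 2 (D * ‖p‖) ^ 2 ≤ 1 ∧
      b * min 2 (D * ‖p‖) ^ 2 ≤ 1 / 8 * ‖p‖ ^ 2 :=
    le_min_iff.1 (div_mul_min_two_sq_le hD (norm_nonneg p))
  have hweight (q : V) : max (‖q‖ ^ 2 - B) 0 ≤ ‖q‖ ^ 2 :=
    max_le (sub_le_self _ hB0.le) (sq_nonneg _)
  obtain ⟨A, hA, hTA, hAp⟩ : ∃ A ≥ 0,
      (∫⁻ k, ENNReal.ofReal (max (‖k‖ ^ 2 - B) 0) * ‖X (k - p) - X k * c‖ₑ ^ 2)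
        ≤ ENNReal.ofReal A ∧ A + b * min 2 (D * ‖p‖) ^ 2 ≤ ‖p‖ ^ 2 := by
    -- Once `8 C ≤ ‖p‖ ^ 2`, the error `C` and the fluctuation term each cost at most `‖p‖ ^ 2 / 8`.
    rcases le_total (‖p‖ ^ 2) (8 * C) with hsmall | hlarge
    · have hCB : C' / B ≤ 1 / 2 := by
        rw [div_le_iff₀ hB0]
        linarith
      exact ⟨C' / B * ‖p‖ ^ 2, by positivity, hlow B p c hB0 (le_sqrt_of_sq_le hsmall) hc',
        by nlinarith [sq_nonneg ‖p‖]⟩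
    · rcases le_total (‖p‖ ^ 2) (2 * B) with hpB | hpB
      · exact ⟨3 / 4 * ‖p‖ ^ 2 + C, by positivity,
          hquadratic _ p c _ 0 (by positivity) hc (fun _ => le_max_right _ _) hweight
            (fun q => by simpa using! max_norm_add_sq_sub_le_of_le hpB), by linarith⟩
      · exact ⟨‖p‖ ^ 2 - B + C, by linarith,
          hquadratic _ p c _ _ (by linarith) hc (fun _ => le_max_right _ _) hweight
            (fun q => max_norm_add_sq_sub_le_of_ge hpB), by linarith⟩
  calc _ ≤ ENNReal.ofReal A + ENNReal.ofReal (b * min 2 (D * ‖p‖) ^ 2) := by gcongr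
    _ = ENNReal.ofReal (A + b * min 2 (D * ‖p‖) ^ 2) :=
        (ENNReal.ofReal_add hA (by positivity)).symm
    _ ≤ ENNReal.ofReal (‖p‖ ^ 2) := ENNReal.ofReal_le_ofReal hAp

end MultiplierBounds

section LocalizationBound

variable {V : Type*} [NormedAddCommGroup V] [InnerProductSpace ℝ V] [FiniteDimensional ℝ V]
  [MeasurableSpace V] [BorelSpace V] {K : Set V} {χ : 𝓢(V, ℂ)}

theorem exists_lintegral_boxMultiplier_add_le (hχsymm : ∀ q, ‖𝓕 χ (-q)‖ = ‖𝓕 χ q‖)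
    (hχ1 : ∫ x, ‖χ x‖ ^ 2 ≤ 1) (hK : MeasurableSet K) (hK1 : volume K = 1) {r : ℝ}
    (hr : ∀ z ∈ K, ‖z‖ ≤ r) :
    ∃ b > (0 : ℝ), ∃ B₀ > (0 : ℝ), ∀ B ≥ B₀, ∀ p : V,
      (∫⁻ k, ENNReal.ofReal (max (‖k‖ ^ 2 - B) 0) * ‖boxMultiplier K χ k p‖ₑ ^ 2)
        + ENNReal.ofReal (b * min 2 (2 * π * (r + r) * ‖p‖) ^ 2) ≤ ENNReal.ofReal (‖p‖ ^ 2) := by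
  obtain ⟨z, hz⟩ := nonempty_of_measure_ne_zero (hK1.trans_ne one_ne_zero)
  have hr0 : 0 ≤ r := (norm_nonneg z).trans (hr z hz)
  obtain ⟨b, hb, B₀, hB₀, h⟩ := exists_lintegral_translate_sub_mul_add_le hχsymm
    ((SchwartzMap.integral_norm_sq_fourier χ).trans_le hχ1)
    (show 0 ≤ 2 * π * (r + r) by positivity)
  refine ⟨b, hb, B₀, hB₀, fun B hB p => ?_⟩
  refine h B hB p _ (norm_fourier_indicator_one_neg_le hK hK1 p) ?_
  have hone : ‖1 - 𝓕 (K.indicator (1 : V → ℂ)) (-p)‖ ≤ 2 * π * (0 + r) * ‖p‖ := by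
    simpa using! norm_fourierChar_sub_fourier_indicator_le hK hK1 hr 0 p
  exact hone.trans (by gcongr)

theorem exists_lintegral_fourier_mul_fluctuation_add_le (hχsymm : ∀ q, ‖𝓕 χ (-q)‖ = ‖𝓕 χ q‖)
    (hχ1 : ∫ x, ‖χ x‖ ^ 2 ≤ 1) (hK : MeasurableSet K) (hK1 : volume K = 1) {r : ℝ}
    (hr : ∀ z ∈ K, ‖z‖ ≤ r) :
    ∃ b > (0 : ℝ), ∃ B₀ > (0 : ℝ), ∀ B ≥ B₀, ∀ f : V → ℂ, Measurable f → Integrable f →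
      (∃ C, ∀ x, ‖f x‖ ≤ C) →
      (∫⁻ u, ∫⁻ k, ENNReal.ofReal (max (‖k‖ ^ 2 - B) 0)
          * ‖𝓕 (fun y => χ y * fluctuation K f u y) k‖ₑ ^ 2)
        + ENNReal.ofReal b * ∫⁻ u, ∫⁻ y in K, ‖fluctuation K f u y‖ₑ ^ 2
      ≤ ∫⁻ p, ENNReal.ofReal (‖p‖ ^ 2) * ‖𝓕 f p‖ₑ ^ 2 := by
  obtain ⟨b, hb, B₀, hB₀, hmult⟩ := exists_lintegral_boxMultiplier_add_le hχsymm hχ1 hK hK1 hr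
  refine ⟨b, hb, B₀, hB₀, fun B hB f hfm hf ⟨C, hC⟩ => ?_⟩
  have hff : Measurable fun p => ‖𝓕 f p‖ₑ ^ 2 :=
    (continuous_fourier_of_integrable hf).measurable.enorm.pow_const 2
  set φ : V → ℝ := fun p => min 2 (2 * π * (r + r) * ‖p‖) ^ 2
  have hφ : Measurable fun p => ENNReal.ofReal (φ p) * ‖𝓕 f p‖ₑ ^ 2 :=
    .mul (by fun_prop) hff
  rw [lintegral_lintegral_enorm_sq_fourier_mul_fluctuation hK (by simp [hK1])
    χ.continuous.measurable χ.integrable hfm hf hC (by fun_prop)]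
  set T : V → ℝ≥0∞ := fun p =>
    ∫⁻ k, ENNReal.ofReal (max (‖k‖ ^ 2 - B) 0) * ‖boxMultiplier K χ k p‖ₑ ^ 2
  calc (∫⁻ p, T p * ‖𝓕 f p‖ₑ ^ 2)
        + ENNReal.ofReal b * ∫⁻ u, ∫⁻ y in K, ‖fluctuation K f u y‖ₑ ^ 2
      ≤ (∫⁻ p, T p * ‖𝓕 f p‖ₑ ^ 2)
        + ENNReal.ofReal b * ∫⁻ p, ENNReal.ofReal (φ p) * ‖𝓕 f p‖ₑ ^ 2 := by
        gcongr _ + _ * ?_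
        exact lintegral_setLIntegral_enorm_sq_fluctuation_le hK hK1 hr hfm hf hC
    _ = ∫⁻ p, (T p + ENNReal.ofReal (b * φ p)) * ‖𝓕 f p‖ₑ ^ 2 := by
        rw [← lintegral_const_mul _ hφ, ← lintegral_add_right _ (hφ.const_mul _)]
        simp only [ENNReal.ofReal_mul hb.le, add_mul, mul_assoc]
    _ ≤ ∫⁻ p, ENNReal.ofReal (‖p‖ ^ 2) * ‖𝓕 f p‖ₑ ^ 2 := by
        gcongr with p
        exact hmult B hB p

theorem enorm_integral_mul_norm_sq_le {X E : Type*} [MeasurableSpace X] {μ : Measure X}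
    [SeminormedAddCommGroup E] {w : X → ℝ} (hw : ∀ x, 0 ≤ w x) (g : X → E) :
    ‖∫ x, w x * ‖g x‖ ^ 2 ∂μ‖ₑ ≤ ∫⁻ x, ENNReal.ofReal (w x) * ‖g x‖ₑ ^ 2 ∂μ := by
  refine (enorm_integral_le_lintegral_enorm _).trans_eq (lintegral_congr fun x => ?_)
  rw [enorm_mul, enorm_pow, enorm_norm, Real.enorm_of_nonneg (hw x)]

theorem exists_integral_fourier_mul_fluctuation_add_le (hχsymm : ∀ q, ‖𝓕 χ (-q)‖ = ‖𝓕 χ q‖)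
    (hχ1 : ∫ x, ‖χ x‖ ^ 2 ≤ 1) (hK : MeasurableSet K) (hK1 : volume K = 1) {r : ℝ}
    (hr : ∀ z ∈ K, ‖z‖ ≤ r) :
    ∃ b > (0 : ℝ), ∃ B₀ > (0 : ℝ), ∀ B ≥ B₀, ∀ f : 𝓢(V, ℂ),
      ∫ u, ((∫ k, max (‖k‖ ^ 2 - B) 0 * ‖𝓕 (fun y => χ y * fluctuation K f u y) k‖ ^ 2)
        + b * ∫ y in K, ‖fluctuation K f u y‖ ^ 2) ≤ ∫ ξ, ‖ξ‖ ^ 2 * ‖𝓕 f ξ‖ ^ 2 := by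
  obtain ⟨b, hb, B₀, hB₀, hmain⟩ :=
    exists_lintegral_fourier_mul_fluctuation_add_le hχsymm hχ1 hK hK1 hr
  refine ⟨b, hb, B₀, hB₀, fun B hB f => ?_⟩
  have hfm := f.continuous.measurable
  have hfluct : Measurable fun u => ∫⁻ y in K, ‖fluctuation K f u y‖ₑ ^ 2 :=
    ((measurable_fluctuation hfm).enorm.pow_const 2).lintegral_prod_right'
  refine (ENNReal.ofReal_le_ofReal_iff (by positivity)).1 ?_
  calc ENNReal.ofReal (∫ u, ((∫ k, max (‖k‖ ^ 2 - B) 0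
          * ‖𝓕 (fun y => χ y * fluctuation K f u y) k‖ ^ 2)
        + b * ∫ y in K, ‖fluctuation K f u y‖ ^ 2))
      ≤ ∫⁻ u, ((∫⁻ k, ENNReal.ofReal (max (‖k‖ ^ 2 - B) 0)
          * ‖𝓕 (fun y => χ y * fluctuation K f u y) k‖ₑ ^ 2)
        + ENNReal.ofReal b * ∫⁻ y in K, ‖fluctuation K f u y‖ₑ ^ 2) := by
        refine (Real.ofReal_le_enorm _).trans
          ((enorm_integral_le_lintegral_enorm _).trans (lintegral_mono fun u => ?_))
        refine (enorm_add_le _ _).trans (add_le_add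
          (enorm_integral_mul_norm_sq_le (fun _ => le_max_right _ _) _) ?_)
        rw [enorm_mul, Real.enorm_of_nonneg hb.le]
        gcongr
        simpa using enorm_integral_mul_norm_sq_le (w := fun _ => 1) (fun _ => zero_le_one) _
    _ ≤ ∫⁻ ξ, ENNReal.ofReal (‖ξ‖ ^ 2) * ‖𝓕 f ξ‖ₑ ^ 2 := by
        rw [lintegral_add_right _ (hfluct.const_mul _), lintegral_const_mul _ hfluct]
        exact hmain B hB f hfm f.integrable ⟨_, f.norm_le_seminorm ℝ⟩
    _ = ENNReal.ofReal (∫ ξ, ‖ξ‖ ^ 2 * ‖𝓕 f ξ‖ ^ 2) := by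
        rw [ofReal_integral_eq_lintegral_ofReal (integrable_pow_mul_norm_sq (𝓕 f) 2)
          (ae_of_all _ fun ξ => by positivity)]
        refine lintegral_congr fun ξ => ?_
        rw [ENNReal.ofReal_mul (by positivity), ENNReal.ofReal_pow (norm_nonneg (𝓕 f ξ)),
          ofReal_norm, SchwartzMap.fourier_coe]

end LocalizationBound

section KineticEnergy

variable {V : Type*} [NormedAddCommGroup V] [InnerProductSpace ℝ V] [FiniteDimensional ℝ V]
  [MeasurableSpace V] [BorelSpace V]

theorem norm_fourier_ofReal_neg (φ : V → ℝ) (ξ : V) :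
    ‖𝓕 (fun x => (φ x : ℂ)) (-ξ)‖ = ‖𝓕 (fun x => (φ x : ℂ)) ξ‖ := by
  have hconj : 𝓕 (fun x => (φ x : ℂ)) (-ξ) = starRingEnd ℂ (𝓕 (fun x => (φ x : ℂ)) ξ) := by
    simp only [Real.fourier_eq, Circle.smul_def, smul_eq_mul, ← integral_conj, map_mul,
      Complex.conj_ofReal, Circle.starRingEnd_addChar, inner_neg_right]
  rw [hconj, RCLike.norm_conj]

theorem norm_fourier_lineDerivOp (f : 𝓢(V, ℂ)) (m ξ : V) :
    ‖𝓕 (∂_{m} f) ξ‖ ^ 2 = (2 * π) ^ 2 * (⟪m, ξ⟫ ^ 2 * ‖𝓕 f ξ‖ ^ 2) := by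
  rw [SchwartzMap.fourier_lineDerivOp_eq, smul_apply,
    SchwartzMap.smulLeftCLM_apply_apply (by fun_prop), norm_smul, norm_smul, real_inner_comm]
  simp [abs_of_pos pi_pos, mul_pow]

theorem integral_sum_norm_sq_fderiv {ι : Type*} [Fintype ι] (b : OrthonormalBasis ι ℝ V)
    (f : 𝓢(V, ℂ)) :
    ∫ x, ∑ i, ‖fderiv ℝ f x (b i)‖ ^ 2 = (2 * π) ^ 2 * ∫ ξ, ‖ξ‖ ^ 2 * ‖𝓕 f ξ‖ ^ 2 := by
  have hint (g : 𝓢(V, ℂ)) : Integrable fun x => ‖g x‖ ^ 2 := by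
    simpa using integrable_pow_mul_norm_sq g 0
  calc ∫ x, ∑ i, ‖fderiv ℝ f x (b i)‖ ^ 2
      = ∑ i, ∫ ξ, ‖𝓕 (∂_{b i} f) ξ‖ ^ 2 := by
        simp_rw [← SchwartzMap.lineDerivOp_apply_eq_fderiv, SchwartzMap.integral_norm_sq_fourier]
        exact integral_finsetSum _ fun i _ => hint (∂_{b i} f)
    _ = ∫ ξ, (2 * π) ^ 2 * (‖ξ‖ ^ 2 * ‖𝓕 f ξ‖ ^ 2) := by
        rw [← integral_finsetSum _ fun i _ => hint (𝓕 (∂_{b i} f))]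
        simp_rw [norm_fourier_lineDerivOp, ← Finset.mul_sum, ← Finset.sum_mul,
          ← b.sum_sq_inner_right]
    _ = (2 * π) ^ 2 * ∫ ξ, ‖ξ‖ ^ 2 * ‖𝓕 f ξ‖ ^ 2 := integral_const_mul _ _

end KineticEnergy

section BoxCoordinates

/-- The unit cube, as a subset of Euclidean space. -/
def euclideanCube : Set (EuclideanSpace ℝ (Fin 3)) := WithLp.ofLp ⁻¹' cube

theorem cube_eq_Icc : cube = Set.Icc (fun _ => -(1 : ℝ) / 2) (fun _ => 1 / 2) := by
  ext x
  simp [cube, Pi.le_def, forall_and]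

theorem isCompact_cube : IsCompact cube := by
  rw [cube_eq_Icc]
  exact isCompact_Icc

theorem measurableSet_euclideanCube : MeasurableSet euclideanCube :=
  (PiLp.volume_preserving_ofLp (Fin 3)).measurable isCompact_cube.measurableSet

theorem volume_euclideanCube : volume euclideanCube = 1 := by
  rw [euclideanCube, (PiLp.volume_preserving_ofLp (Fin 3)).measure_preimage
    isCompact_cube.measurableSet.nullMeasurableSet, cube_eq_Icc, Real.volume_Icc_pi]
  norm_num

theorem exists_norm_le_of_mem_euclideanCube : ∃ r, ∀ z ∈ euclideanCube, ‖z‖ ≤ r :=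
  (isCompact_cube.image (PiLp.continuous_toLp 2 _)).isBounded.exists_norm_le.imp
    fun _ hr z hz => hr z ⟨z.ofLp, hz, rfl⟩

theorem integral_eq_integral_smul_add {E : Type*} [NormedAddCommGroup E] [NormedSpace ℝ E]
    (G : Vec3 → E) {c : ℝ} (hc : c ≠ 0) (u : EuclideanSpace ℝ (Fin 3)) :
    ∫ x, G x = |c| ^ 3 • ∫ y : EuclideanSpace ℝ (Fin 3), G (c • (y + u)).ofLp := by
  have hofLp : ∫ y : EuclideanSpace ℝ (Fin 3), G y.ofLp = ∫ x, G x :=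
    (PiLp.volume_preserving_ofLp (Fin 3)).integral_comp
      (MeasurableEquiv.toLp 2 _).symm.measurableEmbedding G
  rw [integral_add_right_eq_self fun y : EuclideanSpace ℝ (Fin 3) => G (c • y).ofLp,
    Measure.integral_comp_smul volume (fun y : EuclideanSpace ℝ (Fin 3) => G y.ofLp), hofLp,
    finrank_euclideanSpace_fin, smul_smul, abs_inv, abs_pow, mul_inv_cancel₀ (by positivity),
    one_smul]

theorem θu_smul_add {L : ℝ} (hL : L ≠ 0) (u y : EuclideanSpace ℝ (Fin 3)) :
    θu L u.ofLp (L • (y + u)).ofLp = euclideanCube.indicator 1 y := by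
  simp only [θu, WithLp.ofLp_smul, WithLp.ofLp_add, inv_smul_smul₀ hL, add_sub_cancel_right]
  rfl

theorem χu_smul_add (χ : Vec3 → ℝ) {L : ℝ} (hL : L ≠ 0) (u y : EuclideanSpace ℝ (Fin 3)) :
    χu χ L u.ofLp (L • (y + u)).ofLp = χ y.ofLp := by
  simp only [χu, WithLp.ofLp_smul, WithLp.ofLp_add, inv_smul_smul₀ hL, add_sub_cancel_right]

theorem Qu_smul_add (f : Vec3 → ℂ) {L : ℝ} (hL : 0 < L) (u y : EuclideanSpace ℝ (Fin 3)) :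
    Qu L u.ofLp f (L • (y + u)).ofLp
      = euclideanCube.indicator (fluctuation euclideanCube (fun z => f (L • z).ofLp) u) y := by
  have hmean : ((L : ℂ) ^ 3)⁻¹ * ∫ x, (θu L u.ofLp x : ℂ) * f x
      = ∫ z in euclideanCube, f (L • (z + u)).ofLp := by
    rw [integral_eq_integral_smul_add _ hL.ne' u, abs_of_pos hL, Complex.real_smul,
      Complex.ofReal_pow, inv_mul_cancel_left₀ (by exact_mod_cast (pow_pos hL 3).ne'),
      setIntegral_eq_integral_indicator_one_mul measurableSet_euclideanCube]
    refine integral_congr_ae (ae_of_all _ fun z => ?_)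
    dsimp only
    rw [θu_smul_add hL.ne']
    by_cases hz : z ∈ euclideanCube <;> simp [hz]
  rw [Qu, hmean, θu_smul_add hL.ne']
  by_cases hy : y ∈ euclideanCube <;> simp [hy, fluctuation]

theorem χu_mul_Qu_smul_add {χ : Vec3 → ℝ} (hχ : tsupport χ ⊆ cube) (f : Vec3 → ℂ) {L : ℝ}
    (hL : 0 < L) (u y : EuclideanSpace ℝ (Fin 3)) :
    (χu χ L u.ofLp (L • (y + u)).ofLp : ℂ) * Qu L u.ofLp f (L • (y + u)).ofLp
      = χ y.ofLp * fluctuation euclideanCube (fun z => f (L • z).ofLp) u y := by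
  rw [χu_smul_add χ hL.ne', Qu_smul_add f hL]
  by_cases hy : y ∈ euclideanCube
  · rw [Set.indicator_of_mem hy]
  · rw [image_eq_zero_of_notMem_tsupport fun h => hy (hχ h), Complex.ofReal_zero, zero_mul,
      zero_mul]

theorem norm_ftC_smul (g : Vec3 → ℂ) {L : ℝ} (hL : 0 < L) (u k : EuclideanSpace ℝ (Fin 3)) :
    ‖ftC g (-(2 * π / L) • k).ofLp‖
      = L ^ 3 * ‖𝓕 (fun y : EuclideanSpace ℝ (Fin 3) => g (L • (y + u)).ofLp) k‖ := by
  have hphase (y : EuclideanSpace ℝ (Fin 3)) :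
      Complex.exp (Complex.I * ((∑ i, (-(2 * π / L) • k).ofLp i * (L • (y + u)).ofLp i : ℝ) : ℂ))
        = 𝐞 (-⟪u, k⟫) * 𝐞 (-⟪y, k⟫) := by
    have harg : ∑ i, (-(2 * π / L) • k).ofLp i * (L • (y + u)).ofLp i
        = 2 * π * (-⟪u, k⟫ + -⟪y, k⟫) := by
      rw [← neg_add, ← inner_add_left, PiLp.inner_apply, add_comm u, ← Finset.sum_neg_distrib,
        Finset.mul_sum]
      refine Finset.sum_congr rfl fun i _ => ?_
      simp
      field_simp
    rw [← Circle.coe_mul, ← AddChar.map_add_eq_mul, Real.fourierChar_apply, harg, mul_comm]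
  rw [ftC, integral_eq_integral_smul_add _ hL.ne' u, norm_smul, abs_of_pos hL]
  simp_rw [hphase, mul_assoc]
  rw [integral_const_mul, norm_mul, Circle.norm_coe, one_mul, Real.norm_of_nonneg (by positivity)]
  rfl

end BoxCoordinates

section Rescaling

/-- The Schwartz function `y ↦ f (L y)` on Euclidean space, in which the boxes have unit side. -/
def rescale (f : 𝓢(Vec3, ℂ)) {L : ℝ} (hL : L ≠ 0) : 𝓢(EuclideanSpace ℝ (Fin 3), ℂ) :=
  SchwartzMap.compCLMOfContinuousLinearEquiv ℝ
    ((PiLp.continuousLinearEquiv 2 ℝ fun _ : Fin 3 => ℝ).trans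
      (ContinuousLinearEquiv.smulLeft (Units.mk0 L hL))) f

theorem rescale_apply (f : 𝓢(Vec3, ℂ)) {L : ℝ} (hL : L ≠ 0) (y : EuclideanSpace ℝ (Fin 3)) :
    rescale f hL y = f (L • y).ofLp :=
  rfl

theorem fderiv_rescale_basisFun (f : 𝓢(Vec3, ℂ)) {L : ℝ} (hL : L ≠ 0)
    (y : EuclideanSpace ℝ (Fin 3)) (i : Fin 3) :
    fderiv ℝ (rescale f hL) y (EuclideanSpace.basisFun (Fin 3) ℝ i)
      = L • fderiv ℝ f (L • y).ofLp (Pi.single i 1) := by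
  have hchain := (PiLp.continuousLinearEquiv 2 ℝ fun _ : Fin 3 => ℝ).trans
    (ContinuousLinearEquiv.smulLeft (Units.mk0 L hL)) |>.comp_right_fderiv (f := f) (x := y)
  refine (DFunLike.congr_fun hchain _).trans ?_
  rw [EuclideanSpace.basisFun_apply]
  exact map_smul (fderiv ℝ f (L • y).ofLp) L (Pi.single i (1 : ℝ))

theorem integral_sum_norm_sq_fderiv_eq_rescale (f : 𝓢(Vec3, ℂ)) {L : ℝ} (hL : 0 < L) :
    ∫ x, ∑ i, ‖fderiv ℝ f x (Pi.single i 1)‖ ^ 2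
      = 4 * π ^ 2 * L * ∫ ξ, ‖ξ‖ ^ 2 * ‖𝓕 (rescale f hL.ne') ξ‖ ^ 2 := by
  have hF := integral_sum_norm_sq_fderiv (EuclideanSpace.basisFun (Fin 3) ℝ) (rescale f hL.ne')
  simp_rw [fderiv_rescale_basisFun, norm_smul, mul_pow, ← Finset.mul_sum] at hF
  rw [integral_const_mul, norm_of_nonneg hL.le] at hF
  rw [integral_eq_integral_smul_add _ hL.ne' 0, abs_of_pos hL, smul_eq_mul]
  simp_rw [add_zero]
  linear_combination L * hF

theorem integral_max_mul_norm_sq_ftC_eq (f : 𝓢(Vec3, ℂ)) {χ : Vec3 → ℝ} (hχ : tsupport χ ⊆ cube)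
    {s L : ℝ} (hs : s ≠ 0) (hL : 0 < L) (u : EuclideanSpace ℝ (Fin 3)) :
    ((2 * π) ^ 3)⁻¹ * ∫ p : Vec3, max ((∑ k, p k ^ 2) - (4 * s ^ 2 * L ^ 2)⁻¹) 0
        * ‖ftC (fun x => (χu χ L u.ofLp x : ℂ) * Qu L u.ofLp (fun y => f y) x) p‖ ^ 2
      = 4 * π ^ 2 * L * ∫ k, max (‖k‖ ^ 2 - ((4 * π * s) ^ 2)⁻¹) 0
        * ‖𝓕 (fun y => (χ y.ofLp : ℂ)
            * fluctuation euclideanCube (rescale f hL.ne') u y) k‖ ^ 2 := by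
  have hscale (t : ℝ) : max (‖-(2 * π / L)‖ ^ 2 * t - (4 * s ^ 2 * L ^ 2)⁻¹) 0
      = (2 * π / L) ^ 2 * max (t - ((4 * π * s) ^ 2)⁻¹) 0 := by
    rw [mul_max_of_nonneg _ _ (by positivity), mul_zero, norm_neg, norm_of_nonneg (by positivity)]
    congr 1
    field_simp
    ring
  have hform (k : EuclideanSpace ℝ (Fin 3)) :
      max ((∑ i, (-(2 * π / L) • (k + 0)).ofLp i ^ 2) - (4 * s ^ 2 * L ^ 2)⁻¹) 0
        * ‖ftC (fun x => (χu χ L u.ofLp x : ℂ) * Qu L u.ofLp (fun y => f y) x)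
            (-(2 * π / L) • (k + 0)).ofLp‖ ^ 2
      = (2 * π) ^ 2 * L ^ 4 * (max (‖k‖ ^ 2 - ((4 * π * s) ^ 2)⁻¹) 0
        * ‖𝓕 (fun y => (χ y.ofLp : ℂ)
            * fluctuation euclideanCube (rescale f hL.ne') u y) k‖ ^ 2) := by
    rw [add_zero, ← EuclideanSpace.real_norm_sq_eq, norm_smul, mul_pow, hscale,
      norm_ftC_smul _ hL u]
    simp_rw [χu_mul_Qu_smul_add hχ _ hL, ← rescale_apply f hL.ne']
    field_simp
  have hc : -(2 * π / L) ≠ 0 := neg_ne_zero.2 (by positivity)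
  rw [integral_eq_integral_smul_add _ hc 0]
  simp_rw [hform]
  rw [integral_const_mul, smul_eq_mul, abs_neg, abs_of_pos (by positivity), ← mul_assoc,
    ← mul_assoc]
  congr 1
  field_simp
  ring

theorem integral_norm_sq_Qu_eq (f : 𝓢(Vec3, ℂ)) {L : ℝ} (hL : 0 < L)
    (u : EuclideanSpace ℝ (Fin 3)) :
    ∫ x, ‖Qu L u.ofLp (fun y => f y) x‖ ^ 2
      = L ^ 3 * ∫ y in euclideanCube, ‖fluctuation euclideanCube (rescale f hL.ne') u y‖ ^ 2 := by
  rw [integral_eq_integral_smul_add _ hL.ne' u, abs_of_pos hL, smul_eq_mul,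
    ← integral_indicator measurableSet_euclideanCube]
  congr with y
  rw [Qu_smul_add _ hL]
  simp_rw [← rescale_apply f hL.ne']
  by_cases hy : y ∈ euclideanCube <;> simp [hy]

end Rescaling

theorem exists_schwartzMap_eq_ofReal {χ : Vec3 → ℝ} (hχsm : ContDiff ℝ (⊤ : ℕ∞) χ)
    (hχsupp : tsupport χ ⊆ cube) :
    ∃ X : 𝓢(EuclideanSpace ℝ (Fin 3), ℂ), ∀ y, X y = χ y.ofLp := by
  have hcompact : HasCompactSupport χ :=
    isCompact_cube.of_isClosed_subset (isClosed_tsupport χ) hχsupp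
  have hcompact' : HasCompactSupport fun y : EuclideanSpace ℝ (Fin 3) => (χ y.ofLp : ℂ) :=
    (hcompact.comp_homeomorph (PiLp.homeomorph 2 fun _ : Fin 3 => ℝ)).comp_left
      Complex.ofReal_zero
  have hsmooth : ContDiff ℝ (⊤ : ℕ∞) fun y : EuclideanSpace ℝ (Fin 3) => (χ y.ofLp : ℂ) :=
    Complex.ofRealCLM.contDiff.comp (hχsm.comp PiLp.contDiff_ofLp)
  exact ⟨hcompact'.toSchwartzMap hsmooth, fun _ => rfl⟩

theorem kinetic_localization_general
    (χ : Vec3 → ℝ) (hχsm : ContDiff ℝ (⊤ : ℕ∞) χ) (hχnorm : ∫ x : Vec3, (χ x) ^ 2 ≤ 1)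
    (hχsupp : tsupport χ ⊆ cube) :
    ∃ b > (0 : ℝ), ∃ s₀ > (0 : ℝ), ∀ s : ℝ, 0 < s → s < s₀ → ∀ L : ℝ, 0 < L →
      ∀ f : SchwartzMap Vec3 ℂ,
      ∫ u : Vec3,
          (((2 * π) ^ 3)⁻¹ *
            ∫ p : Vec3,
              max ((∑ k, (p k) ^ 2) - (4 * s ^ 2 * L ^ 2)⁻¹) 0 *
                ‖ftC (fun x => (χu χ L u x : ℂ) * Qu L u (fun y => f y) x) p‖ ^ 2)
          + (b / L ^ 2) * ∫ x : Vec3, ‖Qu L u (fun y => f y) x‖ ^ 2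
        ≤ ∫ x : Vec3, ∑ k : Fin 3, ‖fderiv ℝ (fun y => f y) x (Pi.single k 1)‖ ^ 2 := by
  obtain ⟨X, hX⟩ := exists_schwartzMap_eq_ofReal hχsm hχsupp
  have hXsymm (q) : ‖𝓕 X (-q)‖ = ‖𝓕 X q‖ := by
    simp_rw [SchwartzMap.fourier_coe, funext hX]
    exact norm_fourier_ofReal_neg _ q
  have hX1 : ∫ y, ‖X y‖ ^ 2 ≤ 1 := by
    rw [integral_eq_integral_smul_add _ one_ne_zero 0] at hχnorm
    simpa [hX] using hχnorm
  obtain ⟨r, hr⟩ := exists_norm_le_of_mem_euclideanCube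
  obtain ⟨b, hb, B₀, hB₀, hmain⟩ := exists_integral_fourier_mul_fluctuation_add_le hXsymm hX1
    measurableSet_euclideanCube volume_euclideanCube hr
  refine ⟨4 * π ^ 2 * b, by positivity, (4 * π * √B₀)⁻¹, by positivity,
    fun s hs hs₀ L hL f => ?_⟩
  have hB : B₀ ≤ ((4 * π * s) ^ 2)⁻¹ := by
    rw [← one_div, le_div_iff₀ (by positivity), ← sq_sqrt hB₀.le, ← mul_pow]
    rw [lt_inv_comm₀ hs (by positivity), inv_eq_one_div, lt_div_iff₀ hs] at hs₀
    exact pow_le_one₀ (by positivity) (by linarith)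
  rw [integral_sum_norm_sq_fderiv_eq_rescale f hL, integral_eq_integral_smul_add _ one_ne_zero 0,
    abs_one, one_pow, one_smul]
  refine le_of_eq_of_le ?_ (mul_le_mul_of_nonneg_left (hmain _ hB (rescale f hL.ne'))
    (show 0 ≤ 4 * π ^ 2 * L by positivity))
  rw [← integral_const_mul]
  congr with u
  rw [one_smul, add_zero, integral_max_mul_norm_sq_ftC_eq f hχsupp hs.ne' hL u,
    integral_norm_sq_Qu_eq f hL u]
  simp_rw [hX, mul_add]
  congr 1
  field_simp

/-- **Kinetic energy localization inequality (Brietzke–Fournais–Solovej).**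
For a smooth, even localization function `χ` supported in the unit cube with
`∫χ² = 1`, there exist `b > 0` and `s₀ > 0` so that for all `0 < s < s₀`, `L > 0`
and Schwartz `f`, the full kinetic energy dominates the average over sliding boxes
of the localized kinetic forms
`Q_u[χ_u(−Δ−¼(sL)⁻²)₊χ_u + b/L²]Q_u`. -/
theorem kinetic_localization
    (χ : Vec3 → ℝ) (hχsm : ContDiff ℝ (⊤ : ℕ∞) χ) (hχeven : ∀ x, χ (-x) = χ x)
    (hχnorm : ∫ x : Vec3, (χ x) ^ 2 = 1) (hχsupp : tsupport χ ⊆ cube) :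
    ∃ b > (0 : ℝ), ∃ s₀ > (0 : ℝ), ∀ s : ℝ, 0 < s → s < s₀ → ∀ L : ℝ, 0 < L →
      ∀ f : SchwartzMap Vec3 ℂ,
      ∫ u : Vec3,
          (((2 * π) ^ 3)⁻¹ *
            ∫ p : Vec3,
              max ((∑ k, (p k) ^ 2) - (4 * s ^ 2 * L ^ 2)⁻¹) 0 *
                ‖ftC (fun x => (χu χ L u x : ℂ) * Qu L u (fun y => f y) x) p‖ ^ 2)
          + (b / L ^ 2) * ∫ x : Vec3, ‖Qu L u (fun y => f y) x‖ ^ 2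
        ≤ ∫ x : Vec3, ∑ k : Fin 3, ‖fderiv ℝ (fun y => f y) x (Pi.single k 1)‖ ^ 2 :=
  kinetic_localization_general χ hχsm hχnorm.le hχsupp
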